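/- arXiv:2208.10904 — 6 statements merged into one kernel-verified Lean document; each statement's English description precedes it below -/
import Mathlib

section
/- Let b ≥ 1 be a real number and let Z be a real random variable such that Z ∈ [−b, b−1] almost surely and the essential supremum of Z minus the essential infimum of Z is at most b. Then 4·E[Z²] − 3·(E[Z])² ≤ (4/3)·b². -/
open MeasureTheory

/-!
Put `a = min (essInf Z) 0`. The oscillation and range hypotheses give `Z ∈ [a, a + b]` almost surely
with `-b ≤ a ≤ 0`. Integrating `(Z - a) * (a + b - Z) ≥ 0` (the Bhatia–Davis inequality) yields
`E[Z²] ≤ (2a + b) μ - a (a + b)` with `μ = E[Z]`. Maximizing `4 (2a + b) μ - 4 a (a + b) - 3 μ²`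
over `μ` (at `μ = 2 (2a + b) / 3`) gives `4/3 b² + 4/3 a (a + b)`, and `a (a + b) ≤ 0`.
-/

theorem stmt_2 {Ω : Type*} [MeasurableSpace Ω] (P : Measure Ω) [IsProbabilityMeasure P]
    (b : ℝ) (hb : 1 ≤ b) (Z : Ω → ℝ) (hZmeas : Measurable Z)
    (hZrange : ∀ᵐ ω ∂P, Z ω ∈ Set.Icc (-b) (b - 1))
    (hZosc : essSup Z P - essInf Z P ≤ b) :
    4 * (∫ ω, (Z ω) ^ 2 ∂P) - 3 * (∫ ω, Z ω ∂P) ^ 2 ≤ (4 / 3) * b ^ 2 := by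
  -- In `ℝ` the essential supremum and infimum are meaningful only for essentially bounded functions.
  have hbdA : Filter.IsBoundedUnder (· ≤ ·) (ae P) Z :=
    ⟨b - 1, by simpa using hZrange.mono fun ω h => h.2⟩
  have hbdB : Filter.IsBoundedUnder (· ≥ ·) (ae P) Z :=
    ⟨-b, by simpa using hZrange.mono fun ω h => h.1⟩
  have hsup : ∀ᵐ ω ∂P, Z ω ≤ essSup Z P := ae_le_essSup hbdA
  have hinf : ∀ᵐ ω ∂P, essInf Z P ≤ Z ω := ae_essInf_le hbdB
  have hm : -b ≤ essInf Z P :=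
    Filter.le_liminf_of_le hbdA.isCoboundedUnder_ge (hZrange.mono fun ω h => h.1)
  obtain ⟨a, ha, ha', hZa⟩ : ∃ a : ℝ, -b ≤ a ∧ a ≤ 0 ∧ ∀ᵐ ω ∂P, a ≤ Z ω ∧ Z ω ≤ a + b := by
    refine ⟨min (essInf Z P) 0, le_min hm (by linarith), min_le_right _ _, ?_⟩
    filter_upwards [hsup, hinf, hZrange] with ω h1 h2 h3
    refine ⟨(min_le_left _ _).trans h2, ?_⟩
    rcases min_cases (essInf Z P) 0 with h | h <;> linarith [h3.2]
  have hbound : ∀ᵐ ω ∂P, ‖Z ω‖ ≤ b := by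
    filter_upwards [hZrange] with ω h
    exact abs_le.2 ⟨h.1, by linarith [h.2]⟩
  have hZint : Integrable Z P := .of_bound hZmeas.aestronglyMeasurable b hbound
  have hle : ∫ ω, (Z ω) ^ 2 ∂P ≤ ∫ ω, ((2 * a + b) * Z ω - a * (a + b)) ∂P := by
    refine integral_mono_of_nonneg (.of_forall fun ω => sq_nonneg _)
      ((hZint.const_mul _).sub (integrable_const _)) ?_
    filter_upwards [hZa] with ω h
    nlinarith [mul_nonneg (sub_nonneg.2 h.1) (sub_nonneg.2 h.2)]
  rw [integral_sub (hZint.const_mul _) (integrable_const _), integral_const_mul] at hle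
  simp only [integral_const, probReal_univ, one_smul] at hle
  have hprod : a * (a + b) ≤ 0 := mul_nonpos_of_nonpos_of_nonneg ha' (by linarith)
  -- The square completes the quadratic in the mean at its maximizer.
  nlinarith [sq_nonneg (3 * (∫ ω, Z ω ∂P) - 2 * (2 * a + b))]
end

section
/- Let b ≥ 1 be a real number and let Z be a real random variable such that Z ∈ [−b, b−1] almost surely and the essential supremum of Z minus the essential infimum of Z is at most b. Let μ = E[Z]. Then E[(Z² − (Z − μ)²)²] ≤ (4/3)·b²·μ². -/
open MeasureTheory

/-!
Since `Z² - (Z - μ)² = μ (2 Z - μ)`, the left side equals `μ² (4 E[Z²] - 3 μ²)`. The essential range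
of `Z` lies in an interval `[a, a + b]` with `-b ≤ a ≤ 0`, where `a = min (essInf Z) 0`. Taking the
expectation of `(Z - a) (a + b - Z) ≥ 0` gives `E[Z²] ≤ (2 a + b) μ - a (a + b)`, and maximizing
the resulting concave quadratic in `μ` gives
`4 E[Z²] - 3 μ² ≤ (4/3) b² + (4/3) a (a + b) ≤ (4/3) b²`.
-/

theorem stmt_3 {Ω : Type*} [MeasurableSpace Ω] (P : Measure Ω) [IsProbabilityMeasure P]
    (b : ℝ) (hb : 1 ≤ b) (Z : Ω → ℝ) (hZmeas : Measurable Z)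
    (hZrange : ∀ᵐ ω ∂P, Z ω ∈ Set.Icc (-b) (b - 1))
    (hZosc : essSup Z P - essInf Z P ≤ b)
    (μ : ℝ) (hμ : μ = ∫ ω, Z ω ∂P) :
    (∫ ω, ((Z ω) ^ 2 - (Z ω - μ) ^ 2) ^ 2 ∂P) ≤ (4 / 3) * b ^ 2 * μ ^ 2 := by
  have hbdd_above : Filter.IsBoundedUnder (· ≤ ·) (ae P) Z :=
    ⟨b - 1, Filter.eventually_map.2 (hZrange.mono fun ω h => h.2)⟩
  have hbdd_below : Filter.IsBoundedUnder (· ≥ ·) (ae P) Z :=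
    ⟨-b, Filter.eventually_map.2 (hZrange.mono fun ω h => h.1)⟩
  have hsup : ∀ᵐ ω ∂P, Z ω ≤ essSup Z P := ae_le_essSup hbdd_above
  have hinf : ∀ᵐ ω ∂P, essInf Z P ≤ Z ω := ae_essInf_le hbdd_below
  have hinf_ge : -b ≤ essInf Z P :=
    Filter.le_liminf_of_le hbdd_above.isCoboundedUnder_ge (hZrange.mono fun ω h => h.1)
  obtain ⟨a, ha_lower, ha_upper, hZa⟩ :
      ∃ a : ℝ, -b ≤ a ∧ a ≤ 0 ∧ ∀ᵐ ω ∂P, a ≤ Z ω ∧ Z ω ≤ a + b := by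
    refine ⟨min (essInf Z P) 0, le_min hinf_ge (by linarith), min_le_right _ _, ?_⟩
    filter_upwards [hsup, hinf, hZrange] with ω h1 h2 h3
    refine ⟨(min_le_left _ _).trans h2, ?_⟩
    rcases min_choice (essInf Z P) 0 with h | h <;> rw [h]
    · linarith
    · linarith [h3.2]
  have hZ_bound : ∀ᵐ ω ∂P, ‖Z ω‖ ≤ b := by
    filter_upwards [hZrange] with ω h
    rw [Real.norm_eq_abs, abs_le]
    exact ⟨h.1, by linarith [h.2]⟩
  have hL2 : MemLp Z 2 P := MemLp.of_bound hZmeas.aestronglyMeasurable b hZ_bound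
  have hint : Integrable Z P := hL2.integrable (by norm_num)
  have hint_sq : Integrable (fun ω => Z ω ^ 2) P := hL2.integrable_sq
  have hsq : ∫ ω, Z ω ^ 2 ∂P ≤ (2 * a + b) * μ - a * (a + b) := by
    have hmono : ∫ ω, Z ω ^ 2 ∂P ≤ ∫ ω, ((2 * a + b) * Z ω - a * (a + b)) ∂P := by
      refine integral_mono_ae hint_sq ((hint.const_mul _).sub (integrable_const _)) ?_
      filter_upwards [hZa] with ω h
      nlinarith [mul_nonneg (sub_nonneg.2 h.1) (sub_nonneg.2 h.2)]
    rw [integral_sub (hint.const_mul _) (integrable_const _), integral_const_mul, ← hμ] at hmono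
    simpa using hmono
  have hexpand : ∫ ω, ((Z ω) ^ 2 - (Z ω - μ) ^ 2) ^ 2 ∂P
      = μ ^ 2 * (4 * ∫ ω, Z ω ^ 2 ∂P) - 3 * μ ^ 2 * μ ^ 2 := by
    have hpoint : ∀ ω, ((Z ω) ^ 2 - (Z ω - μ) ^ 2) ^ 2
        = (4 * μ ^ 2 * Z ω ^ 2 - 4 * μ ^ 3 * Z ω) + μ ^ 4 := fun ω => by ring
    have hdiff : Integrable (fun ω => 4 * μ ^ 2 * Z ω ^ 2 - 4 * μ ^ 3 * Z ω) P :=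
      (hint_sq.const_mul _).sub (hint.const_mul _)
    simp_rw [hpoint]
    rw [integral_add hdiff (integrable_const _),
      integral_sub (hint_sq.const_mul _) (hint.const_mul _), integral_const_mul,
      integral_const_mul, ← hμ]
    simp only [integral_const, probReal_univ, one_smul]
    ring
  have hkey : 4 * ∫ ω, Z ω ^ 2 ∂P ≤ 4 / 3 * b ^ 2 + 3 * μ ^ 2 := by
    -- The square completes the quadratic in `μ`; the product is `-a (a + b) ≥ 0`.
    nlinarith [sq_nonneg (3 * μ - 2 * (2 * a + b)),
      mul_nonneg (neg_nonneg.2 ha_upper) (by linarith : 0 ≤ a + b)]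
  rw [hexpand]
  nlinarith [mul_le_mul_of_nonneg_left hkey (sq_nonneg μ)]
end

section
/- The function ψ : ℝ → ℝ defined by ψ(z) = (e^z − 1 − z)/z² for z ≠ 0 and ψ(0) = 1/2 is monotone nondecreasing on all of ℝ. -/
/-!
The function has the integral representation `ψ z = ∫ t in 0..1, (1 - t) * exp (t * z)`, valid also
at `z = 0`. For each `t ∈ [0, 1]` the integrand is nondecreasing in `z`, hence so is `ψ`.
-/

lemma integral_one_sub_mul_exp (z : ℝ) :
    ∫ t in (0 : ℝ)..1, (1 - t) * Real.exp (t * z) =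
      if z = 0 then 1 / 2 else (Real.exp z - 1 - z) / z ^ 2 := by
  have hint : IntervalIntegrable (fun t : ℝ => (1 - t) * Real.exp (t * z))
      MeasureTheory.volume 0 1 := Continuous.intervalIntegrable (by fun_prop) _ _
  split_ifs with hz
  · have hderiv : ∀ t ∈ Set.uIcc (0 : ℝ) 1,
        HasDerivAt (fun t : ℝ => t - t ^ 2 / 2) ((1 - t) * Real.exp (t * z)) t := by
      intro t _
      refine ((hasDerivAt_id t).sub ((hasDerivAt_pow 2 t).div_const 2)).congr_deriv ?_
      simp [hz]
    rw [intervalIntegral.integral_eq_sub_of_hasDerivAt hderiv hint]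
    norm_num
  · have hderiv : ∀ t ∈ Set.uIcc (0 : ℝ) 1,
        HasDerivAt (fun t : ℝ => ((1 - t) / z + 1 / z ^ 2) * Real.exp (t * z))
          ((1 - t) * Real.exp (t * z)) t := by
      intro t _
      have hlin : HasDerivAt (fun t : ℝ => (1 - t) / z + 1 / z ^ 2) (-1 / z) t :=
        (((hasDerivAt_id t).const_sub 1).div_const z).add_const _
      have hexp : HasDerivAt (fun t : ℝ => Real.exp (t * z)) (Real.exp (t * z) * (1 * z)) t :=
        ((hasDerivAt_id t).mul_const z).exp
      refine (hlin.mul hexp).congr_deriv ?_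
      field_simp
      ring
    rw [intervalIntegral.integral_eq_sub_of_hasDerivAt hderiv hint]
    simp
    field_simp
    ring

theorem stmt_4 (ψ : ℝ → ℝ)
    (hψ : ∀ z : ℝ, ψ z = if z = 0 then 1 / 2 else (Real.exp z - 1 - z) / z ^ 2) :
    Monotone ψ := by
  intro x y hxy
  rw [hψ x, hψ y, ← integral_one_sub_mul_exp, ← integral_one_sub_mul_exp]
  refine intervalIntegral.integral_mono_on zero_le_one
    (Continuous.intervalIntegrable (by fun_prop) _ _)
    (Continuous.intervalIntegrable (by fun_prop) _ _) ?_
  intro t ht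
  exact mul_le_mul_of_nonneg_left
    (Real.exp_le_exp.mpr (mul_le_mul_of_nonneg_left hxy ht.1)) (sub_nonneg.mpr ht.2)
end

section
/- Let η > 0 and let V be a real random variable on a probability space such that η·V ≥ −0.8 almost surely, and such that V and V² are integrable (so that exp(−ηV) is bounded above and integrable). Then E[exp(−η·V)] ≤ 1 − η·E[V] + 0.67·η²·E[V²]. -/
/-! The bound is the expectation of the pointwise inequality `exp z ≤ 1 + z + 0.67 * z ^ 2`, valid
for `z ≤ 0.8`, at `z = -η * V`. For `z ≤ 0` even the constant `1 / 2` suffices, while on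
`[0, 0.8]` the Taylor polynomial of degree four with its remainder gives the constant `0.67`. -/

open MeasureTheory

/-- With `t = -z`, this follows from `1 + t + t ^ 2 / 2 ≤ exp t` and
`(1 + t + t ^ 2 / 2) * (1 - t + t ^ 2 / 2) = 1 + t ^ 4 / 4 ≥ 1`. -/
lemma exp_le_quadratic_of_nonpos {z : ℝ} (hz : z ≤ 0) :
    Real.exp z ≤ 1 + z + z ^ 2 / 2 := by
  have h1 := Real.quadratic_le_exp_of_nonneg (neg_nonneg.mpr hz)
  have h2 : Real.exp z * Real.exp (-z) = 1 := by rw [← Real.exp_add]; simp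
  have hq : 0 ≤ 1 + z + z ^ 2 / 2 := by nlinarith [sq_nonneg (z + 1)]
  have h3 : Real.exp z * Real.exp (-z) ≤ (1 + z + z ^ 2 / 2) * Real.exp (-z) := by
    have h4 := mul_le_mul_of_nonneg_left h1 hq
    nlinarith [sq_nonneg (z ^ 2)]
  exact le_of_mul_le_mul_right h3 (Real.exp_pos _)

lemma exp_le_quadratic_of_le {z : ℝ} (hz : z ≤ 0.8) :
    Real.exp z ≤ 1 + z + 0.67 * z ^ 2 := by
  rcases le_total z 0 with h | h
  · nlinarith [exp_le_quadratic_of_nonpos h, sq_nonneg z]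
  · have hb := Real.exp_bound' h (by norm_num at hz; linarith) (n := 5) (by norm_num)
    norm_num [Finset.sum_range_succ, Nat.factorial] at hb hz ⊢
    -- The terms of degree at least two, divided by `z ^ 2`, increase on `[0, 4 / 5]`.
    have hc : 1 / 2 + z / 6 + z ^ 2 / 24 + z ^ 3 / 100 ≤ 67 / 100 := by
      have h2 : z ^ 2 ≤ (4 / 5) ^ 2 := by gcongr
      have h3 : z ^ 3 ≤ (4 / 5) ^ 3 := by gcongr
      norm_num at h2 h3
      linarith
    have := mul_le_mul_of_nonneg_left hc (sq_nonneg z)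
    linarith

theorem stmt_5 {Ω : Type*} [MeasurableSpace Ω] (P : Measure Ω) [IsProbabilityMeasure P]
    (η : ℝ) (hη : 0 < η) (V : Ω → ℝ)
    (hlb : ∀ᵐ ω ∂P, -0.8 ≤ η * V ω)
    (hV : Integrable V P) (hV2 : Integrable (fun ω => (V ω) ^ 2) P)
    (hexp : Integrable (fun ω => Real.exp (-η * V ω)) P) :
    (∫ ω, Real.exp (-η * V ω) ∂P) ≤
      1 - η * (∫ ω, V ω ∂P) + 0.67 * η ^ 2 * (∫ ω, (V ω) ^ 2 ∂P) := by
  have i1 : Integrable (fun ω => 1 - η * V ω) P := (integrable_const _).sub (hV.const_mul η)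
  have i2 : Integrable (fun ω => 0.67 * η ^ 2 * (V ω) ^ 2) P := hV2.const_mul _
  calc (∫ ω, Real.exp (-η * V ω) ∂P)
      ≤ ∫ ω, (1 - η * V ω) + 0.67 * η ^ 2 * (V ω) ^ 2 ∂P := by
        refine integral_mono_ae hexp (i1.add i2) ?_
        filter_upwards [hlb] with ω hω
        have := exp_le_quadratic_of_le (z := -η * V ω) (by linarith)
        linarith
    _ = _ := by
        rw [integral_add i1 i2, integral_sub (integrable_const _) (hV.const_mul η),
          integral_const_mul, integral_const_mul]
        simp
end

section
/- Let b ≥ 1 and η > 0 be real numbers with η·b² ≤ 0.8, and let Z be a real random variable such that Z ∈ [−b, b−1] almost surely and the essential supremum of Z minus the essential infimum of Z is at most b. Let μ = E[Z] and set W = Z² − (Z − μ)². Then ln E[exp(−η·W)] ≤ E[exp(−η·W)] − 1 ≤ −0.25·η·μ². -/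
/-!
Since `W = μ² + 2μ(Z - μ)`, the quantity `E[exp(-ηW)]` is `exp(-ημ²)` times the moment generating
function of `Z - μ` at `-2ημ`. As `Z` lies in an interval of length at most `b`, Hoeffding's lemma
bounds the latter by `exp(η²μ²b²/2) ≤ exp(0.4ημ²)`, so `E[exp(-ηW)] ≤ exp(-0.6 x)` with `x = ημ²`.
Finally `0 ≤ x ≤ ηb² ≤ 0.8`, and `exp(-0.6 x) ≤ 1 - 0.25 x` on this range.
-/

open MeasureTheory

/-- Follows from `exp(-y) ≤ 1 / (1 + y)` and `(1 + 0.6 x)(1 - 0.25 x) = 1 + x (0.35 - 0.15 x) ≥ 1`. -/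
theorem exp_neg_le_of_le {x : ℝ} (h0 : 0 ≤ x) (h1 : x ≤ 0.8) :
    Real.exp (-(0.6 * x)) ≤ 1 - 0.25 * x := by
  have h := Real.add_one_le_exp (0.6 * x)
  rw [Real.exp_neg]
  norm_num at *
  rw [inv_le_iff_one_le_mul₀ (Real.exp_pos _)]
  nlinarith

theorem stmt_6 {Ω : Type*} [MeasurableSpace Ω] (P : Measure Ω) [IsProbabilityMeasure P]
    (b η : ℝ) (hb : 1 ≤ b) (hη : 0 < η) (hηb : η * b ^ 2 ≤ 0.8)
    (Z : Ω → ℝ) (hZmeas : Measurable Z)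
    (hZrange : ∀ᵐ ω ∂P, Z ω ∈ Set.Icc (-b) (b - 1))
    (hZosc : essSup Z P - essInf Z P ≤ b)
    (μ : ℝ) (hμ : μ = ∫ ω, Z ω ∂P)
    (W : Ω → ℝ) (hW : ∀ ω, W ω = (Z ω) ^ 2 - (Z ω - μ) ^ 2) :
    Real.log (∫ ω, Real.exp (-η * W ω) ∂P) ≤ (∫ ω, Real.exp (-η * W ω) ∂P) - 1 ∧
    (∫ ω, Real.exp (-η * W ω) ∂P) - 1 ≤ -0.25 * η * μ ^ 2 := by
  have hbdd_above : Filter.IsBoundedUnder (· ≤ ·) (ae P) Z :=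
    Filter.isBoundedUnder_of_eventually_le (hZrange.mono fun _ h => h.2)
  have hbdd_below : Filter.IsBoundedUnder (· ≥ ·) (ae P) Z :=
    Filter.isBoundedUnder_of_eventually_ge (hZrange.mono fun _ h => h.1)
  have hess : ∀ᵐ ω ∂P, Z ω ∈ Set.Icc (essInf Z P) (essSup Z P) := by
    filter_upwards [ae_le_essSup hbdd_above, ae_essInf_le hbdd_below] with ω h1 h2
    exact ⟨h2, h1⟩
  have hle : essInf Z P ≤ essSup Z P := by
    obtain ⟨ω, h⟩ := hess.exists
    exact h.1.trans h.2
  have hint : Integrable Z P := Integrable.of_mem_Icc (-b) (b - 1) hZmeas.aemeasurable hZrange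
  have hμb : μ ^ 2 ≤ b ^ 2 := by
    have h1 : -b ≤ μ := by
      have := integral_mono_ae (integrable_const (-b)) hint (hZrange.mono fun _ h => h.1)
      simpa [← hμ] using this
    have h2 : μ ≤ b - 1 := by
      have := integral_mono_ae hint (integrable_const (b - 1)) (hZrange.mono fun _ h => h.2)
      simpa [← hμ] using this
    exact sq_le_sq' h1 (by linarith)
  have hmgf := (ProbabilityTheory.hasSubgaussianMGF_of_mem_Icc hZmeas.aemeasurable hess).mgf_le
    (-(2 * η * μ))
  rw [← hμ] at hmgf
  have hpos : 0 < ∫ ω, Real.exp (-η * W ω) ∂P := by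
    apply integral_exp_pos
    -- `-W = μ² - 2μZ ≤ 2μ² + Z² ≤ 3b²` almost surely
    refine Integrable.of_bound (C := Real.exp (η * (3 * b ^ 2)))
      (by simp only [hW]; fun_prop) ?_
    filter_upwards [hZrange] with ω h
    rw [Real.norm_eq_abs, Real.abs_exp, Real.exp_le_exp, hW, neg_mul, ← mul_neg]
    have hz : (Z ω) ^ 2 ≤ b ^ 2 := sq_le_sq' h.1 (by linarith [h.2])
    exact mul_le_mul_of_nonneg_left (by nlinarith [sq_nonneg (Z ω + μ)]) hη.le
  have heq : ∫ ω, Real.exp (-η * W ω) ∂P =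
      Real.exp (-(η * μ ^ 2)) * ∫ ω, Real.exp (-(2 * η * μ) * (Z ω - μ)) ∂P := by
    rw [← integral_const_mul]
    congr 1 with ω
    rw [← Real.exp_add, hW]
    ring_nf
  refine ⟨Real.log_le_sub_one_of_pos hpos, ?_⟩
  have hx0 : 0 ≤ η * μ ^ 2 := by positivity
  have hx1 : η * μ ^ 2 ≤ 0.8 := (mul_le_mul_of_nonneg_left hμb hη.le).trans hηb
  have key : ∫ ω, Real.exp (-η * W ω) ∂P ≤ Real.exp (-(0.6 * (η * μ ^ 2))) := by
    rw [heq]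
    refine (mul_le_mul_of_nonneg_left hmgf (Real.exp_pos _).le).trans ?_
    rw [← Real.exp_add, Real.exp_le_exp]
    have hosc2 : (essSup Z P - essInf Z P) ^ 2 ≤ b ^ 2 :=
      pow_le_pow_left₀ (by linarith) hZosc 2
    have h3 := mul_le_mul_of_nonneg_left
      ((mul_le_mul_of_nonneg_left hosc2 hη.le).trans hηb) hx0
    push_cast
    rw [Real.norm_eq_abs, div_pow, sq_abs]
    norm_num at h3 ⊢
    linarith
  have := exp_neg_le_of_le hx0 hx1
  linarith
end

section
/- Let n ≥ 2 and let X₁, …, X_n be random variables taking values in finite types, defined on a common probability space. Denoting by H(·) the Shannon entropy of the (joint) distribution of its arguments (H(Y) = −∑_y P(Y = y)·ln P(Y = y), with 0·ln 0 = 0), we have H(X₁, …, X_n) ≤ (1/2)·H(X₁) + (1/2)·H(X_n) + (1/2)·∑_{h=1}^{n−1} H(X_h, X_{h+1}). -/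
/-!
Write `a k` for the entropy of `(X₁, …, X_k)`. Subadditivity gives
`a (k + 1) ≤ a k + H(X_{k+1})` and `a (k + 2) ≤ a k + H(X_{k+1}, X_{k+2})`.
The second inequality, by induction from `a 0 + a 1 = H(X₁)`, yields
`a k + a (k + 1) ≤ H(X₁) + ∑_{h=1}^{k} H(X_h, X_{h+1})`: this is the sum of the odd-indexed and
even-indexed pair decompositions, in a form that needs no case split on parity. Adding
`a (k + 1) ≤ a k + H(X_{k+1})` and halving gives the theorem with `n = k + 1`.

Subadditivity itself (`shannonEntropy_prod_le`) is Gibbs' inequality for the joint distribution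
against the product of its marginals.
-/

open MeasureTheory

/-- Shannon entropy (with natural logarithm, convention `0 * log 0 = 0`) of the
distribution of a random variable `X` taking values in a finite type. -/
noncomputable def shannonEntropy {Ω : Type*} [MeasurableSpace Ω] (P : Measure Ω)
    {β : Type*} [Fintype β] (X : Ω → β) : ℝ :=
  ∑ b : β, Real.negMulLog ((P (X ⁻¹' {b})).toReal)

/-- Entropy is unchanged by an injective recoding of the values; values outside the range of the
recoding have probability `0` and contribute nothing. -/
lemma shannonEntropy_comp_injective {Ω : Type*} [MeasurableSpace Ω] (P : Measure Ω)
    {β γ : Type*} [Fintype β] [Fintype γ] (X : Ω → β) (e : β → γ) (he : Function.Injective e) :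
    shannonEntropy P (fun ω => e (X ω)) = shannonEntropy P X := by
  unfold shannonEntropy
  symm
  refine Finset.sum_of_injOn e he.injOn (by simp) ?_ ?_
  · intro c _ hc
    have hempty : (fun ω => e (X ω)) ⁻¹' {c} = ∅ := by
      ext ω
      simp only [Set.mem_preimage, Set.mem_singleton_iff, Set.mem_empty_iff_false, iff_false]
      rintro rfl
      exact hc ⟨X ω, by simp, rfl⟩
    simp [hempty]
  · intro b _
    have hpre : (fun ω => e (X ω)) ⁻¹' {e b} = X ⁻¹' {b} := by
      ext ω
      simp [he.eq_iff]
    rw [hpre]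

lemma sum_measureReal_inter_preimage {Ω : Type*} [MeasurableSpace Ω] (P : Measure Ω)
    [IsProbabilityMeasure P] {γ : Type*} [Fintype γ] (Z : Ω → γ)
    (hZ : ∀ c, MeasurableSet (Z ⁻¹' {c})) (s : Set Ω) (hs : MeasurableSet s) :
    ∑ c, P.real (s ∩ Z ⁻¹' {c}) = P.real s := by
  rw [← measureReal_iUnion_fintype]
  · congr 1
    ext ω
    simp
  · intro c d hcd
    refine Set.disjoint_left.2 ?_
    rintro ω ⟨_, hc⟩ ⟨_, hd⟩
    exact hcd (hc.symm.trans hd)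
  · exact fun c => hs.inter (hZ c)

/-- The pointwise form of Gibbs' inequality for `p` against `a * b`. -/
lemma negMulLog_le_gibbs {p a b : ℝ} (hp : 0 ≤ p) (hpa : p ≤ a) (hpb : p ≤ b) :
    Real.negMulLog p ≤ -(p * Real.log a) - p * Real.log b + (a * b - p) := by
  rcases hp.eq_or_lt with rfl | hp
  · simpa using mul_nonneg hpa hpb
  · have ha : 0 < a := hp.trans_le hpa
    have hb : 0 < b := hp.trans_le hpb
    have h := Real.log_le_sub_one_of_pos (div_pos (mul_pos ha hb) hp)
    rw [Real.log_div (mul_pos ha hb).ne' hp.ne', Real.log_mul ha.ne' hb.ne'] at h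
    have h' := mul_le_mul_of_nonneg_left h hp.le
    have hc : p * (a * b / p - 1) = a * b - p := by field_simp
    rw [hc] at h'
    rw [Real.negMulLog]
    linarith

lemma shannonEntropy_prod_le {Ω : Type*} [MeasurableSpace Ω] (P : Measure Ω)
    [IsProbabilityMeasure P] {β γ : Type*} [Fintype β] [Fintype γ] (Y : Ω → β) (Z : Ω → γ)
    (hY : ∀ b, MeasurableSet (Y ⁻¹' {b})) (hZ : ∀ c, MeasurableSet (Z ⁻¹' {c})) :
    shannonEntropy P (fun ω => (Y ω, Z ω)) ≤ shannonEntropy P Y + shannonEntropy P Z := by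
  let p : β → γ → ℝ := fun b c => P.real (Y ⁻¹' {b} ∩ Z ⁻¹' {c})
  let q : β → ℝ := fun b => P.real (Y ⁻¹' {b})
  let r : γ → ℝ := fun c => P.real (Z ⁻¹' {c})
  have hq : ∀ b, ∑ c, p b c = q b := fun b => sum_measureReal_inter_preimage P Z hZ _ (hY b)
  have hr : ∀ c, ∑ b, p b c = r c := fun c => by
    simpa only [p, Set.inter_comm] using sum_measureReal_inter_preimage P Y hY _ (hZ c)
  have hr1 : ∑ c, r c = 1 := by
    simpa using sum_measureReal_inter_preimage P Z hZ Set.univ MeasurableSet.univ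
  have hjoint : shannonEntropy P (fun ω => (Y ω, Z ω)) = ∑ b, ∑ c, Real.negMulLog (p b c) := by
    unfold shannonEntropy
    rw [Fintype.sum_prod_type]
    refine Finset.sum_congr rfl fun b _ => Finset.sum_congr rfl fun c _ => ?_
    have hpre : (fun ω => (Y ω, Z ω)) ⁻¹' {(b, c)} = Y ⁻¹' {b} ∩ Z ⁻¹' {c} := by
      ext ω
      simp
    rw [hpre]
    rfl
  have hHY : shannonEntropy P Y = ∑ b, ∑ c, -(p b c * Real.log (q b)) := by
    refine Finset.sum_congr rfl fun b _ => ?_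
    rw [Finset.sum_neg_distrib, ← Finset.sum_mul, hq, Real.negMulLog, neg_mul]
    rfl
  have hHZ : shannonEntropy P Z = ∑ b, ∑ c, p b c * -Real.log (r c) := by
    rw [Finset.sum_comm]
    refine Finset.sum_congr rfl fun c _ => ?_
    rw [← Finset.sum_mul, hr, Real.negMulLog, neg_mul, mul_neg]
    rfl
  have hmass : ∑ b, ∑ c, (q b * r c - p b c) = 0 := by
    simp only [Finset.sum_sub_distrib, ← Finset.mul_sum, hq, hr1, mul_one, sub_self,
      Finset.sum_const_zero]
  calc shannonEntropy P (fun ω => (Y ω, Z ω))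
      = ∑ b, ∑ c, Real.negMulLog (p b c) := hjoint
    _ ≤ ∑ b, ∑ c, (-(p b c * Real.log (q b)) + p b c * -Real.log (r c)
          + (q b * r c - p b c)) := by
        refine Finset.sum_le_sum fun b _ => Finset.sum_le_sum fun c _ => ?_
        have h := negMulLog_le_gibbs (p := p b c) (a := q b) (b := r c) measureReal_nonneg
          (measureReal_mono Set.inter_subset_left) (measureReal_mono Set.inter_subset_right)
        linarith
    _ = shannonEntropy P Y + shannonEntropy P Z := by
        simp only [Finset.sum_add_distrib]
        rw [hmass, hHY, hHZ, add_zero]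

theorem stmt_9 {Ω : Type*} [MeasurableSpace Ω] (P : Measure Ω) [IsProbabilityMeasure P]
    (n : ℕ) (hn : 2 ≤ n) (α : ℕ → Type*) [∀ i, Fintype (α i)]
    [∀ i, MeasurableSpace (α i)] [∀ i, MeasurableSingletonClass (α i)]
    (X : ∀ i, Ω → α i) (hX : ∀ i, Measurable (X i)) :
    shannonEntropy P (fun ω => fun i : Fin n => X (i.val + 1) ω) ≤
      (1 / 2) * shannonEntropy P (X 1) + (1 / 2) * shannonEntropy P (X n) +
        (1 / 2) * ∑ h ∈ Finset.Icc 1 (n - 1),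
          shannonEntropy P (fun ω => (X h ω, X (h + 1) ω)) := by
  let T : ∀ k : ℕ, Ω → ∀ i : Fin k, α (i.val + 1) := fun k ω i => X (i.val + 1) ω
  let a : ℕ → ℝ := fun k => shannonEntropy P (T k)
  have hT : ∀ k t, MeasurableSet (T k ⁻¹' {t}) := fun k t =>
    (measurable_pi_lambda (T k) fun i => hX _) (measurableSet_singleton t)
  have step1 : ∀ k, a (k + 1) ≤ a k + shannonEntropy P (X (k + 1)) := by
    intro k
    let e : (∀ i : Fin (k + 1), α (i.val + 1)) → (∀ i : Fin k, α (i.val + 1)) × α (k + 1) :=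
      fun t => (fun i => t ⟨i.val, by omega⟩, t ⟨k, by omega⟩)
    have he : Function.Injective e := by
      intro s t hst
      obtain ⟨h1, h2⟩ := Prod.ext_iff.1 hst
      funext ⟨i, hi⟩
      rcases Nat.lt_succ_iff_lt_or_eq.1 hi with h | rfl
      · exact congrFun h1 ⟨i, h⟩
      · exact h2
    have h := shannonEntropy_comp_injective P (T (k + 1)) e he
    change shannonEntropy P (T (k + 1)) ≤ _
    rw [← h]
    exact shannonEntropy_prod_le P (T k) (X (k + 1)) (hT k)
      fun c => hX _ (measurableSet_singleton c)
  have step2 : ∀ k, a (k + 2) ≤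
      a k + shannonEntropy P (fun ω => (X (k + 1) ω, X (k + 1 + 1) ω)) := by
    intro k
    let e : (∀ i : Fin (k + 2), α (i.val + 1)) →
        (∀ i : Fin k, α (i.val + 1)) × (α (k + 1) × α (k + 1 + 1)) :=
      fun t => (fun i => t ⟨i.val, by omega⟩, (t ⟨k, by omega⟩, t ⟨k + 1, by omega⟩))
    have he : Function.Injective e := by
      intro s t hst
      obtain ⟨h1, h2⟩ := Prod.ext_iff.1 hst
      obtain ⟨h2, h3⟩ := Prod.ext_iff.1 h2
      funext ⟨i, hi⟩
      rcases Nat.lt_succ_iff_lt_or_eq.1 hi with h | rfl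
      · rcases Nat.lt_succ_iff_lt_or_eq.1 h with h | rfl
        · exact congrFun h1 ⟨i, h⟩
        · exact h2
      · exact h3
    have h := shannonEntropy_comp_injective P (T (k + 2)) e he
    change shannonEntropy P (T (k + 2)) ≤ _
    rw [← h]
    exact shannonEntropy_prod_le P (T k) (fun ω => (X (k + 1) ω, X (k + 1 + 1) ω)) (hT k)
      fun c => ((hX _).prodMk (hX _)) (measurableSet_singleton c)
  have a0 : a 0 = 0 := by
    have hpre : ∀ t, T 0 ⁻¹' {t} = Set.univ := fun t => by
      ext ω
      simpa using Subsingleton.elim _ _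
    simp [a, shannonEntropy, hpre]
  have key : ∀ k, a k + a (k + 1) ≤ shannonEntropy P (X 1) +
      ∑ h ∈ Finset.Icc 1 k, shannonEntropy P (fun ω => (X h ω, X (h + 1) ω)) := by
    intro k
    induction k with
    | zero =>
      have := step1 0
      simp only [a0, zero_add] at this ⊢
      simpa using this
    | succ k ih =>
      rw [Finset.sum_Icc_succ_top (by omega)]
      have := step2 k
      change a (k + 1) + a (k + 2) ≤ _
      linarith
  obtain ⟨k, rfl⟩ : ∃ k, n = k + 1 := ⟨n - 1, by omega⟩
  have h1 := key k
  have h2 := step1 k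
  rw [Nat.add_sub_cancel]
  change a (k + 1) ≤ _
  linarith
end
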